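/- For any two distinct vertices x and y of the d-dimensional discrete torus (ℤ/nℤ)^d with d ≥ 1 and n ≥ 1, the probability that a simple symmetric random walk started at x hits y strictly before returning to x is at least 1/(2d·dist(x,y)), where dist is the graph distance on the torus. -/

import Mathlib

open scoped BigOperators

/-- One step of the simple random walk on the torus `(ℤ/nℤ)^d`: move by `±1`
in coordinate `m.1`, with sign given by `m.2`. -/
def torusMove (d n : ℕ) (x : Fin d → ZMod n) (m : Fin d × Bool) : Fin d → ZMod n :=
  Function.update x m.1 (x m.1 + if m.2 then 1 else -1)

/-- Position after performing the list of moves `l` starting from `x`. -/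
def posAfter (d n : ℕ) (x : Fin d → ZMod n) (l : List (Fin d × Bool)) : Fin d → ZMod n :=
  l.foldl (torusMove d n) x

/-- Graph distance on the torus `(ℤ/nℤ)^d`. -/
noncomputable def tdist (d n : ℕ) (x y : Fin d → ZMod n) : ℕ :=
  sInf {L : ℕ | ∃ l : List (Fin d × Bool), l.length = L ∧ posAfter d n x l = y}


namespace TorusHit

/-- The opposite move. -/
def neg {d : ℕ} (m : Fin d × Bool) : Fin d × Bool := (m.1, !m.2)

lemma neg_neg {d : ℕ} (m : Fin d × Bool) : neg (neg m) = m := by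
  simp [neg]

lemma move_neg {d n : ℕ} (z : Fin d → ZMod n) (m : Fin d × Bool) :
    torusMove d n (torusMove d n z m) (neg m) = z := by
  rcases m with ⟨c, b⟩
  cases b <;> simp [torusMove, neg]

lemma move_neg' {d n : ℕ} (z : Fin d → ZMod n) (m : Fin d × Bool) :
    torusMove d n (torusMove d n z (neg m)) m = z := by
  have := move_neg z (neg m)
  rwa [neg_neg] at this

/-- A move is a bijection of the torus. -/
def moveEquiv (d n : ℕ) (m : Fin d × Bool) : (Fin d → ZMod n) ≃ (Fin d → ZMod n) where
  toFun z := torusMove d n z m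
  invFun z := torusMove d n z (neg m)
  left_inv z := move_neg z m
  right_inv z := move_neg' z m

open Classical in
/-- Probability that the walk from `z` first visits `{x,y}` at time `t`, and is then at `y`. -/
noncomputable def a (d n : ℕ) (x y : Fin d → ZMod n) : ℕ → (Fin d → ZMod n) → ℝ
  | 0, z => if z = y then 1 else 0
  | t + 1, z => if z = x ∨ z = y then 0 else
      (1 / (2 * d)) * ∑ m : Fin d × Bool, a d n x y t (torusMove d n z m)

open Classical in
lemma a_eq (d n : ℕ) (x y : Fin d → ZMod n) (t : ℕ) : ∀ z, a d n x y t z =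
    ∑ ω : Fin t → Fin d × Bool,
      (if (∀ s : ℕ, s < t →
            posAfter d n z ((List.ofFn ω).take s) ≠ x ∧
            posAfter d n z ((List.ofFn ω).take s) ≠ y)
          ∧ posAfter d n z (List.ofFn ω) = y
        then ((1 : ℝ) / (2 * d)) ^ t else 0) := by
  induction t with
  | zero => intro z; simp [a, posAfter]
  | succ t ih =>
    intro z
    rw [a, ← (Fin.consEquiv (fun _ : Fin (t+1) => Fin d × Bool)).sum_comp]
    by_cases hz : z = x ∨ z = y
    · rw [if_pos hz]
      symm
      refine Finset.sum_eq_zero fun m _ => ?_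
      rw [if_neg]
      rintro ⟨h, -⟩
      have := h 0 (Nat.succ_pos _)
      simp [posAfter] at this
      tauto
    · rw [if_neg hz, Finset.mul_sum]
      refine Eq.trans ?_ (Fintype.sum_prod_type _).symm
      refine Finset.sum_congr rfl fun m _ => ?_
      rw [ih, Finset.mul_sum]
      refine Finset.sum_congr rfl fun ω _ => ?_
      rw [mul_ite, mul_zero, ← pow_succ']
      refine if_congr ?_ rfl rfl
      simp only [Fin.consEquiv, Equiv.coe_fn_mk, List.ofFn_cons]
      refine and_congr ⟨fun h s hs => ?_, fun h s hs => ?_⟩ Iff.rfl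
      · rcases s with _ | s
        · simpa [posAfter, not_or] using hz
        · simpa [posAfter] using h s (by omega)
      · simpa [posAfter] using h (s+1) (by omega)

lemma a_nonneg (d n : ℕ) (x y : Fin d → ZMod n) (t : ℕ) : ∀ z, 0 ≤ a d n x y t z := by
  induction t with
  | zero => intro z; rw [a]; split_ifs <;> norm_num
  | succ t ih =>
    intro z; rw [a]; split_ifs
    · rfl
    · exact mul_nonneg (by positivity) (Finset.sum_nonneg fun m _ => ih _)

lemma a_sum_le (d n : ℕ) (hd : 1 ≤ d) (x y : Fin d → ZMod n) (T : ℕ) :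
    ∀ z, ∑ t ∈ Finset.range T, a d n x y t z ≤ 1 := by
  have hd' : (0 : ℝ) < d := by exact_mod_cast hd
  induction T with
  | zero => intro z; simp
  | succ T ih =>
    intro z
    rw [Finset.sum_range_succ']
    by_cases hz : z = x ∨ z = y
    · simp only [a, if_pos hz]
      split_ifs <;> simp
    · have hy : z ≠ y := fun h => hz (Or.inr h)
      simp only [a, if_neg hz, if_neg hy, add_zero]
      rw [← Finset.mul_sum, Finset.sum_comm]
      calc _ ≤ (1 / (2 * (d:ℝ))) * ∑ m : Fin d × Bool, (1:ℝ) := by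
            gcongr with m _
            exact ih _
        _ = 1 := by simp; field_simp
        _ ≤ 1 := le_rfl

lemma a_summable (d n : ℕ) (hd : 1 ≤ d) (x y z : Fin d → ZMod n) :
    Summable fun t => a d n x y t z :=
  summable_of_sum_range_le (fun t => a_nonneg d n x y t z) (fun T => a_sum_le d n hd x y T z)

/-- The harmonic function: probability of hitting `y` before `x`. -/
noncomputable def h (d n : ℕ) (x y z : Fin d → ZMod n) : ℝ := ∑' t, a d n x y t z

lemma h_y (d n : ℕ) (hd : 1 ≤ d) (x y : Fin d → ZMod n) : h d n x y y = 1 := by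
  rw [h, (a_summable d n hd x y y).tsum_eq_zero_add]
  simp [a]

lemma h_x (d n : ℕ) (hd : 1 ≤ d) (x y : Fin d → ZMod n) (hxy : x ≠ y) : h d n x y x = 0 := by
  rw [h, (a_summable d n hd x y x).tsum_eq_zero_add]
  simp [a, hxy]

lemma h_harm (d n : ℕ) (hd : 1 ≤ d) (x y z : Fin d → ZMod n) (hx : z ≠ x) (hy : z ≠ y) :
    h d n x y z = (1 / (2 * d)) * ∑ m : Fin d × Bool, h d n x y (torusMove d n z m) := by
  rw [h, (a_summable d n hd x y z).tsum_eq_zero_add]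
  simp only [a, hx, hy, or_self, if_false, zero_add]
  rw [tsum_mul_left, Summable.tsum_finsetSum fun m _ => a_summable d n hd x y _]
  rfl

/-- Energy identity. -/
lemma energy (d n : ℕ) [NeZero n] (hd : 1 ≤ d) (x y : Fin d → ZMod n) (hxy : x ≠ y) :
    ∑ z : Fin d → ZMod n, ∑ m : Fin d × Bool,
      (h d n x y (torusMove d n z m) - h d n x y z) ^ 2 =
    2 * ∑ m : Fin d × Bool, h d n x y (torusMove d n x m) := by
  have hd' : (0 : ℝ) < d := by exact_mod_cast hd
  set f := h d n x y with hf
  have hre : ∀ F : (Fin d → ZMod n) → ℝ,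
      ∑ z : Fin d → ZMod n, ∑ m : Fin d × Bool, F (torusMove d n z m) =
      ∑ z : Fin d → ZMod n, ∑ m : Fin d × Bool, F z := by
    intro F
    rw [Finset.sum_comm, Finset.sum_comm (f := fun z (_ : Fin d × Bool) => F z)]
    exact Finset.sum_congr rfl fun m _ => (moveEquiv d n m).sum_comp F
  have h1 := hre (fun z => f z ^ 2)
  have h2 := hre f
  have h3 : ∑ z : Fin d → ZMod n, (1 - f z) * ∑ m : Fin d × Bool, (f z - f (torusMove d n z m))
      = - ∑ m : Fin d × Bool, f (torusMove d n x m) := by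
    rw [Finset.sum_eq_single x]
    · simp [hf, h_x d n hd x y hxy]
    · intro z _ hz
      by_cases hy : z = y
      · rw [hy, hf, h_y d n hd]; simp
      · have := h_harm d n hd x y z hz hy
        rw [Finset.sum_sub_distrib, ← hf] at *
        simp only [Finset.sum_const, Finset.card_univ, Fintype.card_prod, Fintype.card_fin,
          Fintype.card_bool, nsmul_eq_mul]
        have e : ((d * 2 : ℕ) : ℝ) * f z = ∑ m : Fin d × Bool, f (torusMove d n z m) := by
          rw [this]; push_cast; field_simp
        rw [e]; simp
    · simp
  have key : ∑ z : Fin d → ZMod n, ∑ m : Fin d × Bool, (f (torusMove d n z m) - f z) ^ 2 =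
      (∑ z : Fin d → ZMod n, ∑ m : Fin d × Bool, f (torusMove d n z m) ^ 2
       - ∑ z : Fin d → ZMod n, ∑ m : Fin d × Bool, f z ^ 2)
      + 2 * (∑ z : Fin d → ZMod n, ∑ m : Fin d × Bool, f z
       - ∑ z : Fin d → ZMod n, ∑ m : Fin d × Bool, f (torusMove d n z m))
      - 2 * ∑ z : Fin d → ZMod n, (1 - f z) * ∑ m : Fin d × Bool, (f z - f (torusMove d n z m)) := by
    simp only [← Finset.sum_sub_distrib, Finset.mul_sum, ← Finset.sum_add_distrib]
    refine Finset.sum_congr rfl fun z _ => Finset.sum_congr rfl fun m _ => ?_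
    ring
  rw [key, h1, h2, h3]
  ring

lemma path_bound (d n : ℕ) [NeZero n] (x y : Fin d → ZMod n)
    (l : List (Fin d × Bool)) (hl : posAfter d n x l = y)
    (hmin : ∀ l', posAfter d n x l' = y → l.length ≤ l'.length)
    (f : (Fin d → ZMod n) → ℝ) :
    2 * (f y - f x) ^ 2 ≤ l.length *
      ∑ z : Fin d → ZMod n, ∑ m : Fin d × Bool, (f (torusMove d n z m) - f z) ^ 2 := by
  set u : ℕ → (Fin d → ZMod n) := fun i => posAfter d n x (l.take i) with hu
  have u0 : u 0 = x := by simp [hu, posAfter]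
  have uL : u l.length = y := by simp [hu, hl]
  have hstep : ∀ i : Fin l.length, u (i + 1) = torusMove d n (u i) (l.get i) := by
    intro i
    change posAfter d n x (l.take (i + 1)) = torusMove d n (posAfter d n x (l.take i)) (l.get i)
    rw [List.take_succ_eq_append_getElem i.2]
    simp only [posAfter, List.foldl_append, List.foldl_cons, List.foldl_nil, List.get_eq_getElem]
  have hlt : ∀ i j, i < j → j ≤ l.length → u i ≠ u j := by
    intro i j hij hj he
    have := hmin (l.take i ++ l.drop j) (by
      have e2 : posAfter d n x (l.take j ++ l.drop j) = y := by rw [List.take_append_drop, hl]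
      simp only [posAfter, List.foldl_append] at e2 ⊢
      simp only [hu, posAfter] at he
      rw [he, e2])
    simp at this
    omega
  have hinj : ∀ i j, i ≤ l.length → j ≤ l.length → u i = u j → i = j := by
    intro i j hi hj he
    rcases lt_trichotomy i j with h | h | h
    · exact absurd he (hlt i j h hj)
    · exact h
    · exact absurd he.symm (hlt j i h hi)
  let G : Fin l.length × Bool → (Fin d → ZMod n) × (Fin d × Bool) := fun p =>
    if p.2 then (u (p.1 + 1), neg (l.get p.1)) else (u p.1, l.get p.1)
  have hcross : ∀ i j : Fin l.length, (u (i + 1), neg (l.get i)) ≠ (u j, l.get j) := by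
    intro i j he
    rw [Prod.mk.injEq] at he
    have hj := hstep j
    rw [← he.1, ← he.2, hstep i, move_neg] at hj
    have e1 := hinj _ _ (by omega) (by omega) he.1
    have e2 := hinj _ _ (by omega) (by omega) hj
    omega
  have hG : Function.Injective G := by
    rintro ⟨i, b⟩ ⟨j, c⟩ he
    cases b <;> cases c <;> simp only [G, if_true, if_false, Bool.false_eq_true] at he
    · have := hinj _ _ (by omega) (by omega) (Prod.mk.inj he).1
      rw [Fin.ext this]
    · exact absurd he.symm (hcross _ _)
    · exact absurd he (hcross _ _)
    · have := hinj _ _ (by omega) (by omega) (Prod.mk.inj he).1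
      rw [Fin.ext (Nat.succ_injective this)]
  let D : (Fin d → ZMod n) × (Fin d × Bool) → ℝ := fun p => (f (torusMove d n p.1 p.2) - f p.1) ^ 2
  have hS : ∑ p, D (G p) ≤ ∑ p, D p := by
    rw [← Finset.sum_image (f := D) (s := Finset.univ) (g := G) (fun _ _ _ _ e => hG e)]
    exact Finset.sum_le_sum_of_subset_of_nonneg (Finset.subset_univ _) fun p _ _ => sq_nonneg _
  have hS1 : ∑ p, D (G p) = 2 * ∑ i : Fin l.length, (f (u (i + 1)) - f (u i)) ^ 2 := by
    rw [Fintype.sum_prod_type, Finset.mul_sum]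
    refine Finset.sum_congr rfl fun i _ => ?_
    rw [Fintype.sum_bool]
    have e1 : D (G (i, true)) = (f (u (i + 1)) - f (u i)) ^ 2 := by
      simp only [D, G, if_true]
      rw [hstep i, move_neg]; ring
    have e2 : D (G (i, false)) = (f (u (i + 1)) - f (u i)) ^ 2 := by
      simp only [D, G, if_false, Bool.false_eq_true]
      rw [hstep i]
    rw [e1, e2]; ring
  have htel : ∑ i : Fin l.length, (f (u (i + 1)) - f (u i)) = f y - f x := by
    rw [Fin.sum_univ_eq_sum_range (fun i => f (u (i + 1)) - f (u i)),
      Finset.sum_range_sub (fun i => f (u i)), u0, uL]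
  have hcs := sq_sum_le_card_mul_sum_sq (s := (Finset.univ : Finset (Fin l.length)))
    (f := fun i => f (u (i + 1)) - f (u i))
  rw [htel, Finset.card_univ, Fintype.card_fin] at hcs
  rw [hS1] at hS
  have hS2 : ∑ p, D p = ∑ z : Fin d → ZMod n, ∑ m : Fin d × Bool,
      (f (torusMove d n z m) - f z) ^ 2 := Fintype.sum_prod_type _
  rw [hS2] at hS
  have := mul_le_mul_of_nonneg_left hS (Nat.cast_nonneg (α := ℝ) l.length)
  linarith

end TorusHit

/-- For distinct `x, y` on the torus `(ℤ/nℤ)^d`, the probability that the simple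
symmetric random walk started at `x` hits `y` strictly before returning to `x`
is at least `1/(2d · dist(x,y))`.  The probability is written as the sum over the
first time `t+1` at which the walk visits `{x,y}`, of the probability that this
first visit is at `y`. -/
theorem stmt0 (d n : ℕ) (hd : 1 ≤ d) (hn : 1 ≤ n) (x y : Fin d → ZMod n) (hxy : x ≠ y) :
    (1 : ℝ) / (2 * d * tdist d n x y) ≤
      ∑' t : ℕ, ∑ ω : Fin (t + 1) → Fin d × Bool,
        (if (∀ s : Fin (t + 1), 1 ≤ (s : ℕ) → (s : ℕ) ≤ t →
              posAfter d n x ((List.ofFn ω).take s) ≠ x ∧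
              posAfter d n x ((List.ofFn ω).take s) ≠ y)
            ∧ posAfter d n x (List.ofFn ω) = y
          then ((1 : ℝ) / (2 * d)) ^ (t + 1) else 0) := by
  classical
  have hterm : ∀ t : ℕ, (∑ ω : Fin (t + 1) → Fin d × Bool,
        (if (∀ s : Fin (t + 1), 1 ≤ (s : ℕ) → (s : ℕ) ≤ t →
              posAfter d n x ((List.ofFn ω).take s) ≠ x ∧
              posAfter d n x ((List.ofFn ω).take s) ≠ y)
            ∧ posAfter d n x (List.ofFn ω) = y
          then ((1 : ℝ) / (2 * d)) ^ (t + 1) else 0)) =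
      (1 / (2 * d)) * ∑ m : Fin d × Bool, TorusHit.a d n x y t (torusMove d n x m) := by
    intro t
    rw [← (Fin.consEquiv (fun _ : Fin (t+1) => Fin d × Bool)).sum_comp, Fintype.sum_prod_type,
      Finset.mul_sum]
    refine Finset.sum_congr rfl fun m _ => ?_
    rw [TorusHit.a_eq, Finset.mul_sum]
    refine Finset.sum_congr rfl fun ω _ => ?_
    rw [mul_ite, mul_zero, ← pow_succ']
    refine if_congr ?_ rfl rfl
    simp only [Fin.consEquiv, Equiv.coe_fn_mk, List.ofFn_cons]
    refine and_congr ⟨fun h s hs => ?_, fun h s hs1 hs2 => ?_⟩ Iff.rfl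
    · simpa [posAfter] using h ⟨s + 1, by omega⟩ (by simp) (by simp; omega)
    · rcases s with ⟨_ | s, hs⟩
      · simp at hs1
      · simpa [posAfter] using h s (by omega)
  refine le_of_le_of_eq ?_ (tsum_congr hterm).symm
  have hd' : (0 : ℝ) < d := by exact_mod_cast hd
  rcases Nat.eq_zero_or_pos (tdist d n x y) with h0 | hpos
  · rw [h0]
    simp only [Nat.cast_zero, mul_zero, div_zero]
    exact tsum_nonneg fun t => mul_nonneg (by positivity)
      (Finset.sum_nonneg fun m _ => TorusHit.a_nonneg d n x y t _)
  · haveI : NeZero n := ⟨by omega⟩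
    obtain ⟨l, hlen, hl⟩ := Nat.sInf_mem (Nat.nonempty_of_pos_sInf hpos)
    have hlen' : l.length = tdist d n x y := hlen
    have hb := TorusHit.path_bound d n x y l hl
      (fun l' hl' => by rw [hlen']; exact Nat.sInf_le ⟨l', rfl, hl'⟩) (TorusHit.h d n x y)
    rw [TorusHit.energy d n hd x y hxy, TorusHit.h_x d n hd x y hxy, TorusHit.h_y d n hd,
      hlen'] at hb
    rw [tsum_mul_left, Summable.tsum_finsetSum fun m _ => TorusHit.a_summable d n hd x y _]
    change _ ≤ (1 / (2 * (d : ℝ))) * ∑ m : Fin d × Bool, TorusHit.h d n x y (torusMove d n x m)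
    have hL : (0 : ℝ) < tdist d n x y := by exact_mod_cast hpos
    rw [← div_div, div_eq_mul_one_div (1 / (2 * (d : ℝ)))]
    refine mul_le_mul_of_nonneg_left ?_ (by positivity)
    rw [div_le_iff₀ hL]
    linarith
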